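/- The polynomial F(X,Y) = (X^q + X)(Y^q + Y) - c, where q is a power of a prime p, c is a nonzero element of an algebraically closed field K of characteristic p, is irreducible in K[X,Y]. -/

import Mathlib

open MvPolynomial

/-!
View `(X ^ m + X) * (Y ^ n + Y) - c` as a polynomial in `X` over `R[Y]`. Modulo the prime `Y` it is
the nonzero constant `-c`, so both factors of any factorization are constant modulo `Y`. If both
had positive degree in `X`, then `Y ^ 2` would divide the leading coefficient `Y ^ n + Y`, which it
does not. Hence one factor lies in `R[Y]`; it divides `Y ^ n + Y` and therefore `c`, so it is a
unit.
-/

theorem not_sq_dvd_pow_add_self {R : Type*} [CommRing R] [IsDomain R] {a : R} (ha₀ : a ≠ 0)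
    (ha : ¬IsUnit a) {n : ℕ} (hn : 2 ≤ n) : ¬a ^ 2 ∣ a ^ n + a := by
  rw [dvd_add_right (pow_dvd_pow a hn)]
  intro h
  have h21 : 2 ≤ 1 := (pow_dvd_pow_iff ha₀ ha).1 (by rwa [pow_one])
  lia

section Eisenstein

open Polynomial

theorem isUnit_of_isPrimitive_of_natDegree_eq_zero {R : Type*} [CommSemiring R] {f : R[X]}
    (hf : f.IsPrimitive) (hd : f.natDegree = 0) : IsUnit f := by
  obtain ⟨r, rfl⟩ := natDegree_eq_zero.1 hd
  exact (hf r dvd_rfl).map Polynomial.C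

variable {R : Type*} [CommRing R]

theorem isPrimitive_mul_C_sub_C {f : R[X]} (hf : f.Monic) (hd : f.natDegree ≠ 0) (a : R) {u : R}
    (hu : IsUnit u) : (f * Polynomial.C a - Polynomial.C u).IsPrimitive := by
  intro r hr
  have hcoeff := (Polynomial.C_dvd_iff_dvd_coeff _ _).1 hr
  have hra : r ∣ a := by
    simpa [Polynomial.coeff_C_of_ne_zero hd, hf.coeff_natDegree] using hcoeff f.natDegree
  have hru : r ∣ f.coeff 0 * a - u := by simpa using hcoeff 0
  exact isUnit_of_dvd_unit ((dvd_sub_right (hra.mul_left _)).1 hru) hu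

theorem leadingCoeff_mem_of_natDegree_map_mk_eq_zero {P : Ideal R} {f : R[X]}
    (hf : (f.map (Ideal.Quotient.mk P)).natDegree = 0) (hd : f.natDegree ≠ 0) :
    f.leadingCoeff ∈ P := by
  by_contra hl
  rw [natDegree_map_of_leadingCoeff_ne_zero _ (mt Ideal.Quotient.eq_zero_iff_mem.1 hl)] at hf
  exact hd hf

variable [IsDomain R]

theorem irreducible_of_reverse_eisenstein_criterion {f : R[X]} {P : Ideal R} (hP : P.IsPrime)
    (hf₀ : f.coeff 0 ∉ P) (hfP : ∀ n, n ≠ 0 → f.coeff n ∈ P) (hd : f.natDegree ≠ 0)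
    (hl : f.leadingCoeff ∉ P ^ 2) (hf : f.IsPrimitive) : Irreducible f := by
  refine ⟨fun h => hd (natDegree_eq_zero_of_isUnit h), fun g h hgh => ?_⟩
  have hmap : g.map (Ideal.Quotient.mk P) * h.map (Ideal.Quotient.mk P) =
      Polynomial.C (Ideal.Quotient.mk P (f.coeff 0)) := by
    rw [← Polynomial.map_mul, ← hgh]
    ext n
    rcases eq_or_ne n 0 with rfl | hn
    · rw [Polynomial.coeff_map, coeff_C_zero]
    · rw [Polynomial.coeff_map, Polynomial.coeff_C_of_ne_zero hn,
        Ideal.Quotient.eq_zero_iff_mem.2 (hfP n hn)]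
  have hmap₀ : g.map (Ideal.Quotient.mk P) * h.map (Ideal.Quotient.mk P) ≠ 0 := by
    rwa [hmap, Polynomial.C_ne_zero, Ne, Ideal.Quotient.eq_zero_iff_mem]
  obtain ⟨hg, hh⟩ : (g.map (Ideal.Quotient.mk P)).natDegree = 0 ∧
      (h.map (Ideal.Quotient.mk P)).natDegree = 0 := by
    rw [← Nat.add_eq_zero_iff,
      ← natDegree_mul (left_ne_zero_of_mul hmap₀) (right_ne_zero_of_mul hmap₀), hmap, natDegree_C]
  have hconst : g.natDegree = 0 ∨ h.natDegree = 0 := by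
    by_contra! hpos
    apply hl
    rw [hgh, leadingCoeff_mul, sq]
    exact Ideal.mul_mem_mul (leadingCoeff_mem_of_natDegree_map_mk_eq_zero hg hpos.1)
      (leadingCoeff_mem_of_natDegree_map_mk_eq_zero hh hpos.2)
  have hg_prim : g.IsPrimitive := isPrimitive_of_dvd hf (hgh ▸ dvd_mul_right g h)
  have hh_prim : h.IsPrimitive := isPrimitive_of_dvd hf (hgh ▸ dvd_mul_left h g)
  exact hconst.imp (isUnit_of_isPrimitive_of_natDegree_eq_zero hg_prim)
    (isUnit_of_isPrimitive_of_natDegree_eq_zero hh_prim)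

theorem irreducible_mul_C_sub_C {P : Ideal R} (hP : P.IsPrime) {f : R[X]} (hf : f.Monic)
    (hd : f.natDegree ≠ 0) {a u : R} (ha : a ∈ P) (ha' : a ∉ P ^ 2) (hu : IsUnit u) :
    Irreducible (f * Polynomial.C a - Polynomial.C u) := by
  have hdeg : (f * Polynomial.C a - Polynomial.C u).natDegree = f.natDegree := by
    have ha₀ : a ≠ 0 := fun h => ha' (h ▸ zero_mem _)
    rw [natDegree_sub_C, natDegree_mul_C ha₀]
  have hcoeff {n : ℕ} (hn : n ≠ 0) :
      (f * Polynomial.C a - Polynomial.C u).coeff n = f.coeff n * a := by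
    rw [Polynomial.coeff_sub, coeff_mul_C, Polynomial.coeff_C_of_ne_zero hn, sub_zero]
  have hlead : (f * Polynomial.C a - Polynomial.C u).leadingCoeff = a := by
    rw [leadingCoeff, hdeg, hcoeff hd, hf.coeff_natDegree, one_mul]
  refine irreducible_of_reverse_eisenstein_criterion hP ?_ (fun n hn => ?_) (hdeg ▸ hd)
    (hlead.symm ▸ ha') (isPrimitive_mul_C_sub_C hf hd a hu)
  · rw [Polynomial.coeff_sub, coeff_mul_C, coeff_C_zero, P.sub_mem_iff_right (P.mul_mem_left _ ha)]
    exact fun huP => hP.ne_top (P.eq_top_of_isUnit_mem huP hu)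
  · rw [hcoeff hn]
    exact P.mul_mem_left _ ha

end Eisenstein

theorem stmt_0_general {R : Type*} [CommRing R] [IsDomain R] {m n : ℕ} (hm : 2 ≤ m) (hn : 2 ≤ n)
    {c : R} (hc : IsUnit c) :
    Irreducible (((X 0 : MvPolynomial (Fin 2) R) ^ m + X 0) * (X 1 ^ n + X 1) - C c) := by
  have hY : Prime (X 0 : MvPolynomial (Fin 1) R) := X_prime
  have hmem : (X 0 ^ n + X 0 : MvPolynomial (Fin 1) R) ∈ Ideal.span {X 0} :=
    Ideal.mem_span_singleton.2 (dvd_add (dvd_pow_self _ (by lia)) dvd_rfl)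
  have hnotMem : (X 0 ^ n + X 0 : MvPolynomial (Fin 1) R) ∉ Ideal.span {X 0} ^ 2 := by
    rw [Ideal.span_singleton_pow, Ideal.mem_span_singleton]
    exact not_sq_dvd_pow_add_self hY.ne_zero hY.not_isUnit hn
  have hlt : (Polynomial.X : Polynomial (MvPolynomial (Fin 1) R)).degree < m := by
    rw [Polynomial.degree_X]
    exact_mod_cast hm
  have hdeg : (Polynomial.X ^ m + Polynomial.X : Polynomial (MvPolynomial (Fin 1) R)).natDegree
      ≠ 0 := by
    rw [Polynomial.natDegree_add_eq_left_of_degree_lt (by rwa [Polynomial.degree_X_pow]),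
      Polynomial.natDegree_X_pow]
    lia
  have hY_prime := (Ideal.span_singleton_prime hY.ne_zero).2 hY
  rw [← MulEquiv.irreducible_iff (finSuccEquiv R 1)]
  have hX₁ : finSuccEquiv R 1 (X 1) = Polynomial.C (X 0) := finSuccEquiv_X_succ (j := 0)
  have hC : finSuccEquiv R 1 (C c) = Polynomial.C (C c) := (finSuccEquiv R 1).commutes c
  simpa only [map_sub, map_mul, map_add, map_pow, finSuccEquiv_X_zero, hX₁, hC] using
    irreducible_mul_C_sub_C hY_prime (Polynomial.monic_X_pow_add hlt) hdeg hmem hnotMem (hc.map C)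

theorem stmt_0 (K : Type*) [Field K] [IsAlgClosed K] (p : ℕ) [Fact p.Prime]
    [CharP K p] (n : ℕ) (hn : 1 ≤ n) (q : ℕ) (hq : q = p ^ n) (c : K) (hc : c ≠ 0) :
    Irreducible (((X 0 : MvPolynomial (Fin 2) K) ^ q + X 0) * ((X 1) ^ q + X 1) - C c) := by
  have hq2 : 2 ≤ q := hq ▸ (Fact.out : p.Prime).two_le.trans (Nat.le_self_pow (by lia) p)
  exact stmt_0_general hq2 hq2 hc.isUnit
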